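/- For all n ≥ 0, the number of walks on the slit plane of length 2n+1 ending at (1,0) equals the Catalan number C_{2n+1} = binom(4n+2, 2n+1)/(2n+2); and a_{1,0}(2n) = 0. -/

import Mathlib

open Filter

/-- The forbidden half-line `H = {(k,0) : k ≤ 0}`. -/
def slitH : Set (ℤ × ℤ) := {p : ℤ × ℤ | p.2 = 0 ∧ p.1 ≤ 0}

/-- The four steps of the ordinary square lattice. -/
def sqSteps : Set (ℤ × ℤ) := {(1,0), (-1,0), (0,1), (0,-1)}

/-- The four diagonal steps. -/
def diagSteps : Set (ℤ × ℤ) := {(1,1), (1,-1), (-1,1), (-1,-1)}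

/-- `w : Fin (n+1) → ℤ × ℤ` is a walk on the slit plane with steps in `A`. -/
def IsSlitWalk (A : Set (ℤ × ℤ)) (n : ℕ) (w : Fin (n+1) → ℤ × ℤ) : Prop :=
  w 0 = (0,0) ∧ (∀ m : Fin n, w m.succ - w m.castSucc ∈ A) ∧
    ∀ m : Fin (n+1), 1 ≤ (m : ℕ) → w m ∉ slitH

/-- `a_{i,j}(n)`: the number of walks on the slit plane of length `n` ending at `(i,j)`. -/
noncomputable def slitCount (A : Set (ℤ × ℤ)) (i j : ℤ) (n : ℕ) : ℕ :=
  Nat.card {w : Fin (n+1) → ℤ × ℤ // IsSlitWalk A n w ∧ w (Fin.last n) = (i, j)}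

/-!
Read a walk from the origin to `(1, 0)` as a word in the steps and repeat it periodically. A
rotation of the word gives a walk avoiding the slit exactly when its starting point is, among the
visits to its own height, the last of the leftmost ones. So a word of length `n` has as many good
rotations as its path has heights, and `n * a_{1,0}(n)` counts the pairs of a word ending at
`(1, 0)` and a height `h` visited by its path. Reflecting the path after its first visit to `h`
makes it end at `(1, 2h)`, so these pairs are equinumerous with the words ending at an even height
on the line `x = 1`. For odd `n` the evenness is automatic; the horizontal steps contribute the
generating function `x⁻¹ + 2 + x = x⁻¹ (1 + x)²`, so there are `binom(2n, n+1) = n Cₙ` such words.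
-/

namespace SlitPlane

open Finset

section CyclicPath

variable {G : Type*} [AddCommGroup G] {n : ℕ}

/-- The infinite path from the origin whose steps are the letters of the cyclic word `σ`, read
periodically from the letter `0`. Rotating `σ` amounts to choosing another starting point. -/
def cyclicPath (σ : ZMod n → G) (m : ℕ) : G := ∑ k ∈ range m, σ k

lemma cyclicPath_zero (σ : ZMod n → G) : cyclicPath σ 0 = 0 := sum_range_zero _

lemma cyclicPath_succ (σ : ZMod n → G) (m : ℕ) :
    cyclicPath σ (m + 1) = cyclicPath σ m + σ m := sum_range_succ _ _

lemma cyclicPath_rotate (σ : ZMod n → G) (i m : ℕ) :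
    cyclicPath (fun k => σ (k + (i : ZMod n))) m = cyclicPath σ (i + m) - cyclicPath σ i := by
  simp [cyclicPath, sum_range_add, add_comm]

lemma cyclicPath_period [NeZero n] (σ : ZMod n → G) : cyclicPath σ n = ∑ k, σ k := by
  obtain _ | n := n
  · exact absurd rfl (NeZero.ne 0)
  · exact (sum_range _).trans (sum_congr rfl fun k _ => congrArg σ (Fin.cast_val_eq_self k))

lemma cyclicPath_add_period [NeZero n] (σ : ZMod n → G) (m : ℕ) :
    cyclicPath σ (m + n) = cyclicPath σ m + ∑ k, σ k := by
  rw [← cyclicPath_period, add_comm m, add_comm (cyclicPath σ m)]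
  simp [cyclicPath, sum_range_add]

/-- The cyclic word formed by the increments of `w`. -/
def increments [NeZero n] (w : Fin (n + 1) → G) (k : ZMod n) : G :=
  w (Fin.succ ⟨k.val, k.val_lt⟩) - w (Fin.castSucc ⟨k.val, k.val_lt⟩)

lemma cyclicPath_increments [NeZero n] {w : Fin (n + 1) → G} (hw : w 0 = 0)
    (m : Fin (n + 1)) : cyclicPath (increments w) m = w m := by
  induction m using Fin.induction with
  | zero => simp [cyclicPath_zero, hw]
  | succ m ih =>
    rw [Fin.val_castSucc] at ih
    simp [cyclicPath_succ, ih, increments, ZMod.val_cast_of_lt m.isLt]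

lemma increments_cyclicPath [NeZero n] (σ : ZMod n → G) :
    increments (n := n) (fun m => cyclicPath σ m) = σ := by
  funext k
  simp [increments, cyclicPath_succ]

/-- The cyclic words of length `n` over the alphabet `A` whose letters add up to `e`. -/
def cyclicWords [DecidableEq G] (A : Finset G) (n : ℕ) [NeZero n] (e : G) :
    Finset (ZMod n → G) :=
  {σ ∈ Fintype.piFinset fun _ => A | ∑ k, σ k = e}

variable [NeZero n] [DecidableEq G] {A : Finset G} {e : G}

lemma mem_cyclicWords {σ : ZMod n → G} :
    σ ∈ cyclicWords A n e ↔ (∀ k, σ k ∈ A) ∧ ∑ k, σ k = e := by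
  simp [cyclicWords]

lemma rotate_mem_cyclicWords {σ : ZMod n → G} (hσ : σ ∈ cyclicWords A n e) (i : ZMod n) :
    (fun k => σ (k + i)) ∈ cyclicWords A n e := by
  rw [mem_cyclicWords] at hσ ⊢
  exact ⟨fun k => hσ.1 _, (Equiv.sum_comp (Equiv.addRight i) σ).trans hσ.2⟩

lemma card_filter_rotate_cyclicWords (P : (ZMod n → G) → Prop) [DecidablePred P] (i : ZMod n) :
    #{σ ∈ cyclicWords A n e | P fun k => σ (k + i)} = #{σ ∈ cyclicWords A n e | P σ} := by
  refine card_nbij' (fun σ k => σ (k + i)) (fun σ k => σ (k + -i)) ?_ ?_ ?_ ?_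
  · intro σ hσ
    rw [mem_coe, mem_filter] at hσ ⊢
    exact ⟨rotate_mem_cyclicWords hσ.1 i, hσ.2⟩
  · intro σ hσ
    rw [mem_coe, mem_filter] at hσ ⊢
    exact ⟨rotate_mem_cyclicWords hσ.1 (-i), by simpa using hσ.2⟩
  · exact fun σ _ => by simp
  · exact fun σ _ => by simp

end CyclicPath

section SlitWalk

variable {n : ℕ}

/-- The path `p` avoids the slit at the times `1, …, n`. -/
def AvoidsSlit (n : ℕ) (p : ℕ → ℤ × ℤ) : Prop := ∀ m ∈ Icc 1 n, p m ∉ slitH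

lemma isSlitWalk_cyclicPath {A : Set (ℤ × ℤ)} {σ : ZMod n → ℤ × ℤ}
    (hσ : ∀ k, σ k ∈ A) (hs : AvoidsSlit n (cyclicPath σ)) :
    IsSlitWalk A n fun m => cyclicPath σ m := by
  refine ⟨cyclicPath_zero σ, fun m => ?_, fun m hm => hs m (mem_Icc.2 ⟨hm, m.is_le⟩)⟩
  simpa [cyclicPath_succ] using hσ m

open scoped Classical in
theorem slitCount_eq_card_cyclicWords (A : Finset (ℤ × ℤ)) (i j : ℤ) (n : ℕ) [NeZero n] :
    slitCount A i j n = #{σ ∈ cyclicWords A n (i, j) | AvoidsSlit n (cyclicPath σ)} := by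
  refine (Nat.card_congr ?_).trans (Nat.subtype_card _ fun σ => Iff.rfl)
  refine
    { toFun := fun w => ⟨increments w.1, ?_⟩
      invFun := fun σ => ⟨fun m => cyclicPath σ.1 m, ?_⟩
      left_inv := fun ⟨w, hw, _⟩ => Subtype.ext (funext (cyclicPath_increments hw.1))
      right_inv := fun σ => Subtype.ext (increments_cyclicPath σ.1) }
  · obtain ⟨w, ⟨h0, hsteps, hslit⟩, hend⟩ := w
    have hpath := cyclicPath_increments h0
    refine mem_filter.2 ⟨mem_cyclicWords.2 ⟨fun k => hsteps ⟨k.val, k.val_lt⟩, ?_⟩, fun m hm => ?_⟩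
    · exact (cyclicPath_period _).symm.trans ((hpath (Fin.last n)).trans hend)
    · rw [mem_Icc] at hm
      simpa [← hpath] using hslit ⟨m, by omega⟩ hm.1
  · obtain ⟨σ, hσ⟩ := σ
    obtain ⟨hword, hslit⟩ := mem_filter.1 hσ
    obtain ⟨hsteps, hsum⟩ := mem_cyclicWords.1 hword
    exact ⟨isSlitWalk_cyclicPath hsteps hslit, (cyclicPath_period σ).trans hsum⟩

lemma _root_.IsSlitWalk.map_eq_nsmul {M : Type*} [AddCommMonoid M] {A : Set (ℤ × ℤ)}
    {w : Fin (n + 1) → ℤ × ℤ} (hw : IsSlitWalk A n w) (f : ℤ × ℤ →+ M) {c : M}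
    (hf : ∀ a ∈ A, f a = c) (m : Fin (n + 1)) : f (w m) = (m : ℕ) • c := by
  obtain ⟨h0, hs, -⟩ := hw
  induction m using Fin.induction with
  | zero => simp [h0, ← Prod.zero_eq_mk]
  | succ m ih =>
    rw [← sub_add_cancel (w m.succ) (w m.castSucc), map_add, ih, hf _ (hs m), Fin.val_succ,
      succ_nsmul', Fin.val_castSucc]

end SlitWalk

section CycleLemma

variable {n : ℕ} {p : ℕ → ℤ × ℤ}

lemma avoidsSlit_sub_iff {i : ℕ} :
    (AvoidsSlit n fun m => p (i + m) - p i) ↔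
      ∀ j ∈ Ioc i (i + n), (p j).2 = (p i).2 → (p i).1 < (p j).1 := by
  simp only [AvoidsSlit, slitH, Set.mem_ofPred_eq, Prod.fst_sub, Prod.snd_sub, mem_Icc, mem_Ioc,
    sub_eq_zero, not_and, not_le, sub_pos]
  constructor
  · intro h j hj
    simpa [show i + (j - i) = j by omega] using h (j - i) (by omega)
  · exact fun h m hm => h (i + m) (by omega)

lemma injOn_height_of_avoidsSlit (hp : ∀ m, p (m + n) = p m + (1, 0)) :
    Set.InjOn (fun i => (p i).2) {i | i < n ∧ AvoidsSlit n fun m => p (i + m) - p i} := by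
  have not_before : ∀ i j, j < n → (AvoidsSlit n fun m => p (i + m) - p i) →
      (AvoidsSlit n fun m => p (j + m) - p j) → (p i).2 = (p j).2 → ¬ i < j := by
    intro i j hj hi_avoids hj_avoids heq hij
    rw [avoidsSlit_sub_iff] at hi_avoids hj_avoids
    have hx : (p i).1 < (p j).1 := hi_avoids j (mem_Ioc.2 ⟨by omega, by omega⟩) heq.symm
    have hx' : (p j).1 < (p (i + n)).1 :=
      hj_avoids (i + n) (mem_Ioc.2 ⟨by omega, by omega⟩) (by simp [hp, heq])
    simp only [hp, Prod.fst_add] at hx'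
    omega
  intro i hi j hj heq
  exact le_antisymm (not_lt.1 (not_before _ _ hi.1 hj.2 hi.2 heq.symm))
    (not_lt.1 (not_before _ _ hj.1 hi.2 hj.2 heq))

/-- The starting point is the last of the leftmost visits to the given height. -/
lemma exists_avoidsSlit_of_height (hp : ∀ m, p (m + n) = p m + (1, 0)) {k : ℕ} (hk : k < n) :
    ∃ i < n, (AvoidsSlit n fun m => p (i + m) - p i) ∧ (p i).2 = (p k).2 := by
  obtain ⟨i, hi, hmin⟩ := exists_min_image {i ∈ range n | (p i).2 = (p k).2}
    (fun i => toLex ((p i).1, -(i : ℤ))) ⟨k, by simp [hk]⟩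
  simp only [mem_filter, mem_range, Prod.Lex.toLex_le_toLex] at hi hmin
  refine ⟨i, hi.1, avoidsSlit_sub_iff.2 fun j hj heq => ?_, hi.2⟩
  rw [mem_Ioc] at hj
  obtain hjn | hnj := lt_or_ge j n
  · have := hmin j ⟨hjn, heq.trans hi.2⟩
    omega
  · obtain ⟨j, rfl⟩ := Nat.exists_eq_add_of_le' hnj
    simp only [hp, Prod.fst_add, Prod.snd_add, add_zero] at heq ⊢
    have := hmin j ⟨by omega, heq.trans hi.2⟩
    omega

open scoped Classical in
theorem card_avoidsSlit_eq_card_image_snd (hp : ∀ m, p (m + n) = p m + (1, 0)) :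
    #{i ∈ range n | AvoidsSlit n fun m => p (i + m) - p i} =
      #((range n).image fun i => (p i).2) := by
  rw [← card_image_of_injOn (f := fun i => (p i).2)
    ((injOn_height_of_avoidsSlit hp).mono fun i => by simp)]
  congr 1
  ext h
  simp only [mem_image, mem_filter, mem_range]
  constructor
  · rintro ⟨i, ⟨hi, -⟩, rfl⟩
    exact ⟨i, hi, rfl⟩
  · rintro ⟨k, hk, rfl⟩
    obtain ⟨i, hi, havoids, heq⟩ := exists_avoidsSlit_of_height hp hk
    exact ⟨i, ⟨hi, havoids⟩, heq⟩

end CycleLemma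

section Reflection

variable {G : Type*} [AddCommGroup G] {n : ℕ}

/-- The heights visited by the path of `σ` at the times `0, …, m`. -/
def heights (σ : ZMod n → G × ℤ) (m : ℕ) : Finset ℤ :=
  (range (m + 1)).image fun j => (cyclicPath σ j).2

lemma heights_zero (σ : ZMod n → G × ℤ) : heights σ 0 = {0} := by
  simp [heights, cyclicPath_zero]

lemma heights_succ (σ : ZMod n → G × ℤ) (m : ℕ) :
    heights σ (m + 1) = insert (cyclicPath σ (m + 1)).2 (heights σ m) := by
  rw [heights, range_add_one, image_insert, heights]

lemma mem_heights {σ : ZMod n → G × ℤ} {m : ℕ} {h : ℤ} :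
    h ∈ heights σ m ↔ ∃ j ≤ m, (cyclicPath σ j).2 = h := by
  simp [heights]

lemma heights_period_eq_image_range [NeZero n] {σ : ZMod n → G × ℤ}
    (hσ : (∑ k, σ k).2 = 0) :
    heights σ n = (range n).image fun j => (cyclicPath σ j).2 := by
  rw [heights, range_add_one, image_insert, cyclicPath_period, hσ]
  exact insert_eq_of_mem (mem_image.2 ⟨0, by simp [NeZero.pos], by simp [cyclicPath_zero]⟩)

lemma exists_le_eq_of_abs_sub_le_one {f : ℕ → ℤ} (hf : ∀ i, |f (i + 1) - f i| ≤ 1) {m : ℕ} {h : ℤ}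
    (hh : h ∈ Set.uIcc (f 0) (f m)) : ∃ j ≤ m, f j = h := by
  induction m with
  | zero => exact ⟨0, le_rfl, by simpa [eq_comm] using hh⟩
  | succ m ih =>
    by_cases hm : h ∈ Set.uIcc (f 0) (f m)
    · obtain ⟨j, hj, rfl⟩ := ih hm
      exact ⟨j, by omega, rfl⟩
    · have := abs_le.1 (hf m)
      rw [Set.mem_uIcc] at hh hm
      exact ⟨m + 1, le_rfl, by omega⟩

lemma mem_heights_of_sum_eq [NeZero n] {σ : ZMod n → G × ℤ} (hσ : ∀ k, |(σ k).2| ≤ 1) {h : ℤ}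
    (hsum : (∑ k, σ k).2 = 2 * h) : h ∈ heights σ n := by
  refine mem_heights.2
    (exists_le_eq_of_abs_sub_le_one (f := fun j => (cyclicPath σ j).2) (fun i => ?_) ?_)
  · simpa [cyclicPath_succ] using hσ i
  · rw [Set.mem_uIcc, cyclicPath_period, hsum, cyclicPath_zero, Prod.snd_zero]
    omega

/-- The word whose path is that of `σ`, reflected in the line of height `h` from the first visit
to that line on. -/
def reflectAfter (h : ℤ) (σ : ZMod n → G × ℤ) (k : ZMod n) : G × ℤ :=
  if h ∈ heights σ k.val then ((σ k).1, -(σ k).2) else σ k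

lemma reflectAfter_mem {A : Finset (G × ℤ)} (hA : ∀ a ∈ A, (a.1, -a.2) ∈ A)
    {σ : ZMod n → G × ℤ} (hσ : ∀ k, σ k ∈ A) (h : ℤ) (k : ZMod n) : reflectAfter h σ k ∈ A := by
  unfold reflectAfter
  split_ifs
  exacts [hA _ (hσ k), hσ k]

lemma cyclicPath_reflectAfter (h : ℤ) (σ : ZMod n → G × ℤ) {m : ℕ} (hm : m ≤ n) :
    cyclicPath (reflectAfter h σ) m = ((cyclicPath σ m).1,
      if h ∈ heights σ m then 2 * h - (cyclicPath σ m).2 else (cyclicPath σ m).2) := by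
  induction m with
  | zero =>
    simp only [cyclicPath_zero, heights_zero, mem_singleton]
    split_ifs with hh <;> simp [hh, Prod.ext_iff]
  | succ m ih =>
    rw [cyclicPath_succ, ih (by omega), reflectAfter, ZMod.val_cast_of_lt (by omega)]
    simp only [heights_succ, mem_insert]
    by_cases hvisited : h ∈ heights σ m
    · simp only [hvisited, cyclicPath_succ, or_true, if_true, Prod.ext_iff, Prod.fst_add,
        Prod.snd_add, true_and]
      ring
    · simp only [hvisited, cyclicPath_succ, or_false, if_false, Prod.ext_iff, Prod.fst_add,
        Prod.snd_add, true_and]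
      split_ifs <;> omega

lemma mem_heights_reflectAfter (h : ℤ) (σ : ZMod n → G × ℤ) {m : ℕ} (hm : m ≤ n) :
    h ∈ heights (reflectAfter h σ) m ↔ h ∈ heights σ m := by
  simp only [mem_heights]
  refine exists_congr fun j => and_congr_right fun hj => ?_
  rw [cyclicPath_reflectAfter h σ (hj.trans hm)]
  grind

lemma reflectAfter_reflectAfter [NeZero n] (h : ℤ) (σ : ZMod n → G × ℤ) :
    reflectAfter h (reflectAfter h σ) = σ := by
  funext k
  by_cases hvisited : h ∈ heights σ k.val <;>
    simp [reflectAfter, mem_heights_reflectAfter h σ k.val_lt.le, hvisited]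

lemma sum_reflectAfter [NeZero n] {h : ℤ} {σ : ZMod n → G × ℤ} (hh : h ∈ heights σ n) :
    ∑ k, reflectAfter h σ k = ((∑ k, σ k).1, 2 * h - (∑ k, σ k).2) := by
  rw [← cyclicPath_period, ← cyclicPath_period, cyclicPath_reflectAfter h σ le_rfl, if_pos hh]

/-- Reflecting after the first visit to height `h` turns a pair `(σ, h)` into a word ending at
height `2 * h`, from which `h` and then `σ` are recovered. -/
theorem sum_card_heights [NeZero n] [DecidableEq G] {A : Finset (G × ℤ)}
    (hA_symm : ∀ a ∈ A, (a.1, -a.2) ∈ A) (hA_small : ∀ a ∈ A, |a.2| ≤ 1) (x : G) :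
    ∑ σ ∈ cyclicWords A n (x, 0), #(heights σ n) =
      #{τ ∈ Fintype.piFinset fun _ : ZMod n => A |
        (∑ k, τ k).1 = x ∧ Even (∑ k, τ k).2} := by
  rw [← card_sigma]
  refine card_nbij' (fun σh => reflectAfter σh.2 σh.1)
    (fun τ => ⟨reflectAfter ((∑ k, τ k).2 / 2) τ, (∑ k, τ k).2 / 2⟩) ?_ ?_ ?_ ?_
  · rintro ⟨σ, h⟩ hσh
    simp only [coe_sigma, Set.mem_sigma_iff, mem_coe, mem_cyclicWords] at hσh
    obtain ⟨⟨hσ, hsum⟩, hh⟩ := hσh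
    simp [sum_reflectAfter hh, hsum, reflectAfter_mem hA_symm hσ]
  · intro τ hτ
    simp only [mem_coe, mem_filter, Fintype.mem_piFinset] at hτ
    obtain ⟨hτ, rfl, heven⟩ := hτ
    have htwo := Int.two_mul_ediv_two_of_even heven
    have hmem := mem_heights_of_sum_eq (fun k => hA_small _ (hτ k)) htwo.symm
    simp [mem_cyclicWords, sum_reflectAfter hmem, htwo, reflectAfter_mem hA_symm hτ,
      mem_heights_reflectAfter, hmem]
  · rintro ⟨σ, h⟩ hσh
    simp only [coe_sigma, Set.mem_sigma_iff, mem_coe, mem_cyclicWords] at hσh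
    obtain ⟨⟨-, hsum⟩, hh⟩ := hσh
    simp [sum_reflectAfter hh, hsum, reflectAfter_reflectAfter]
  · intro τ _
    exact reflectAfter_reflectAfter _ τ

end Reflection

section Counting

/-- Each of the `n` rotations permutes the words ending at `(1, 0)`, so the left-hand side counts
pairs of such a word and a starting point from which its path avoids the slit. -/
theorem mul_slitCount_one_zero {A : Finset (ℤ × ℤ)} (hA_symm : ∀ a ∈ A, (a.1, -a.2) ∈ A)
    (hA_small : ∀ a ∈ A, |a.2| ≤ 1) (n : ℕ) [NeZero n] :
    n * slitCount A 1 0 n =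
      #{τ ∈ Fintype.piFinset fun _ : ZMod n => A | (∑ k, τ k).1 = 1 ∧ Even (∑ k, τ k).2} := by
  classical
  calc n * slitCount A 1 0 n
      = ∑ i ∈ range n, #{σ ∈ cyclicWords A n (1, 0) |
          AvoidsSlit n (cyclicPath fun k => σ (k + (i : ZMod n)))} := by
        simp only [card_filter_rotate_cyclicWords fun σ => AvoidsSlit n (cyclicPath σ),
          slitCount_eq_card_cyclicWords, sum_const, card_range, smul_eq_mul]
    _ = ∑ σ ∈ cyclicWords A n (1, 0), #{i ∈ range n |
          AvoidsSlit n fun m => cyclicPath σ (i + m) - cyclicPath σ i} := by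
        simp only [← cyclicPath_rotate, card_filter]
        exact sum_comm
    _ = ∑ σ ∈ cyclicWords A n (1, 0), #(heights σ n) := by
        refine sum_congr rfl fun σ hσ => ?_
        have hsum := (mem_cyclicWords.1 hσ).2
        have hperiod m : cyclicPath σ (m + n) = cyclicPath σ m + (1, 0) := by
          rw [cyclicPath_add_period, hsum]
        rw [heights_period_eq_image_range (by rw [hsum]),
          card_avoidsSlit_eq_card_image_snd hperiod]
    _ = _ := sum_card_heights hA_symm hA_small 1

open Polynomial in
lemma card_filter_piFinset_sum_eq_coeff {ι α : Type*} [Fintype ι] [DecidableEq ι] (A : Finset α)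
    (f : α → ℕ) (d : ℕ) :
    #{σ ∈ Fintype.piFinset fun _ : ι => A | ∑ i, f (σ i) = d} =
      ((∑ a ∈ A, (X : ℕ[X]) ^ f a) ^ Fintype.card ι).coeff d := by
  rw [← card_univ, ← prod_const, prod_univ_sum, finsetSum_coeff, card_filter]
  simp only [prod_pow_eq_pow_sum, coeff_X_pow, eq_comm]

/-- The steps of the square lattice as a `Finset`, so that words of steps can be enumerated. -/
def squareSteps : Finset (ℤ × ℤ) := {(1, 0), (-1, 0), (0, 1), (0, -1)}

lemma coe_squareSteps : (squareSteps : Set (ℤ × ℤ)) = sqSteps := by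
  simp [squareSteps, sqSteps]

open Polynomial in
lemma card_words_squareSteps {ι : Type*} [Fintype ι] [DecidableEq ι] (d : ℕ) :
    #{σ ∈ Fintype.piFinset fun _ : ι => squareSteps |
      (∑ i, σ i).1 + (Fintype.card ι : ℤ) = d} = (2 * Fintype.card ι).choose d := by
  have hgen : ∑ a ∈ squareSteps, (X : ℕ[X]) ^ (a.1 + 1).toNat = (1 + X) ^ 2 := by
    calc ∑ a ∈ squareSteps, (X : ℕ[X]) ^ (a.1 + 1).toNat
        = X ^ 2 + (1 + (X + X)) := by simp [squareSteps]
      _ = (1 + X) ^ 2 := by ring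
  rw [← Nat.cast_id (Nat.choose _ d), ← coeff_one_add_X_pow, pow_mul, ← hgen,
    ← card_filter_piFinset_sum_eq_coeff]
  congr 1
  refine filter_congr fun σ hσ => ?_
  have hnonneg (i : ι) : 0 ≤ (σ i).1 + 1 := by
    have := Fintype.mem_piFinset.1 hσ i
    simp only [squareSteps, mem_insert, mem_singleton] at this
    grind
  zify
  simp [hnonneg, sum_add_distrib, Prod.fst_sum]

/-- The coordinate sum modulo `2`. -/
def parity : ℤ × ℤ →+ ZMod 2 := (Int.castAddHom _).coprod (Int.castAddHom _)

lemma parity_apply (a : ℤ × ℤ) : parity a = a.1 + a.2 := rfl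

lemma parity_of_mem_sqSteps : ∀ a ∈ sqSteps, parity a = 1 := by
  rintro a (rfl | rfl | rfl | rfl) <;> decide

lemma even_snd_sum_of_fst_eq_one {ι : Type*} [Fintype ι] (hι : Odd (Fintype.card ι))
    {σ : ι → ℤ × ℤ} (hσ : ∀ i, σ i ∈ sqSteps) (hsum : (∑ i, σ i).1 = 1) : Even (∑ i, σ i).2 := by
  have hparity : parity (∑ i, σ i) = 1 := by
    rw [map_sum, sum_congr rfl fun i _ => parity_of_mem_sqSteps _ (hσ i)]
    simpa using ZMod.natCast_eq_one_iff_odd.2 hι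
  rw [parity_apply, hsum] at hparity
  rw [← ZMod.intCast_eq_zero_iff_even]
  simpa using hparity

theorem mul_slitCount_sqSteps {n : ℕ} (hn : Odd n) :
    n * slitCount sqSteps 1 0 n = (2 * n).choose (n + 1) := by
  have : NeZero n := ⟨hn.pos.ne'⟩
  rw [← coe_squareSteps, mul_slitCount_one_zero (by decide) (by decide)]
  have hcard := card_words_squareSteps (ι := ZMod n) (n + 1)
  rw [ZMod.card] at hcard
  rw [← hcard]
  congr 1
  refine filter_congr fun σ hσ => ?_
  have heven := even_snd_sum_of_fst_eq_one (σ := σ) (by rwa [ZMod.card]) fun k =>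
    coe_squareSteps ▸ Fintype.mem_piFinset.1 hσ k
  rw [and_iff_left_of_imp heven]
  push_cast
  omega

theorem slitCount_sqSteps_eq_zero {i j : ℤ} {n : ℕ} (hn : parity (i, j) ≠ n) :
    slitCount sqSteps i j n = 0 := by
  rw [slitCount, Nat.card_eq_zero]
  refine Or.inl ⟨fun ⟨w, hw, hend⟩ => hn ?_⟩
  simpa [hend] using hw.map_eq_nsmul parity parity_of_mem_sqSteps (Fin.last n)

lemma mul_catalan_eq_choose (n : ℕ) : n * catalan n = (2 * n).choose (n + 1) := by
  have h := Nat.choose_succ_right_eq (2 * n) n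
  rw [← Nat.centralBinom_eq_two_mul_choose, ← succ_mul_catalan_eq_centralBinom,
    show 2 * n - n = n by omega] at h
  exact Nat.eq_of_mul_eq_mul_right n.succ_pos (by linarith)

end Counting

end SlitPlane

/-- `a_{1,0}(2n+1) = C_{2n+1}` and `a_{1,0}(2n) = 0`. -/
theorem slit_count_1_0 (n : ℕ) :
    slitCount sqSteps 1 0 (2 * n + 1) = catalan (2 * n + 1)
    ∧ slitCount sqSteps 1 0 (2 * n) = 0 := by
  constructor
  · exact Nat.eq_of_mul_eq_mul_left (2 * n).succ_pos <|
      (SlitPlane.mul_slitCount_sqSteps (odd_two_mul_add_one n)).trans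
        (SlitPlane.mul_catalan_eq_choose _).symm
  · refine SlitPlane.slitCount_sqSteps_eq_zero ?_
    rw [ZMod.natCast_eq_zero_iff_even.2 (even_two_mul n)]
    decide
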